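/- Let T, n, m be positive integers, ε ∈ (0,1), δ ∈ (0,1). Set L = ⌈log₂(T+1)⌉ and let 𝒩 = {(i, l, k) : i ∈ Fin n, 0 ≤ l ≤ L, k·2^l < T} (a finite set). For an update sequence V : Fin T → Fin n → ℤ define F(V) ∈ ℝ^𝒩 by F(V)(i,l,k) = ∑_{t < T, t ∈ D(l,k)} V t i, and let μ_V be the product measure on ℝ^𝒩 whose (i,l,k)-factor is the Gaussian distribution N(F(V)(i,l,k), σ²), where σ = (1/ε)·√(2·(L+1)·m·ln(1.25/δ)). Then for any m-neighboring update sequences V, V' and every measurable set Z ⊆ ℝ^𝒩: μ_V(Z) ≤ e^ε · μ_{V'}(Z) + δ. -/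

import Mathlib

/-!
The statement splits into a sensitivity bound and the classical analysis of the Gaussian mechanism.

*Sensitivity* (`sum_sq_nodeCount_sub_le`). Passing from `V` to an `m`-neighboring `V'` changes only
the counters in a set of at most `m` indices. For such a counter, the dyadic intervals of a fixed
level are disjoint, so the changes of its node counts on that level have absolute sum at most `1`,
hence also square sum at most `1`. Summing over the `L + 1` levels and the `m` counters bounds the
squared `ℓ²`-distance of the count vectors by `m (L + 1)`.

*Gaussian mechanism* (`gaussian_mechanism`). Let `a`, `b` be mean vectors with
`‖a - b‖² ≤ Δ`. The log-likelihood ratio `ℓ` of the two product Gaussians is an affine function of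
the outcome, so splitting `Z` according to whether `ℓ ≤ ε` gives
`μ_a Z ≤ e^ε μ_b Z + μ_a {ℓ > ε}` (`pi_gaussianReal_le`). Under `μ_a` the variable `ℓ` has law
`N(s²/2, s²)` with `s = ‖a - b‖ / σ` (`pi_gaussianReal_map_sum`), so the last term is the standard
Gaussian upper tail at `ε/s - s/2`. Writing `σ = c √Δ / ε` with `c² = 2 log (1.25/δ)`, one has
`s ≤ ε / c`, and the tail is taken at a point at least `c - 1/(2c)`, because `ε ≤ 1`.

*Tail estimate* (`stdGaussian_Ioi_le_delta`). Note that `δ = 1.25 exp (-c²/2)`. If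
`x = c - 1/(2c) ≥ 0`, the bound `P(N > x) ≤ exp (-x²/2) / 2` yields
`P(N > x) ≤ (√e / 2) exp (-c²/2) ≤ δ`. If `x < 0`, then `0.4 ≤ c² ≤ 0.5`, so that `x` is close to `0`
and `δ` close to `1`, and `P(N > x) ≤ 1/2 - x` suffices.
-/

open MeasureTheory ProbabilityTheory

/-- Two update sequences `V V' : Fin T → Fin n → ℤ` are `m`-neighboring. -/
def MNeighboring (T n m : ℕ) (V V' : Fin T → Fin n → ℤ) : Prop :=
  ∃ I : Finset (Fin n), I.card ≤ m ∧
    (∀ i ∈ I, ∑ t, |V t i - V' t i| ≤ 1) ∧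
    (∀ j ∉ I, ∀ t, V t j = V' t j)

/-- The finite index set of binary-tree nodes `(i, l, k)` with `i ∈ Fin n`,
`0 ≤ l ≤ L` and `k·2^l < T`.  (Since `2^l ≥ 1`, such `k` satisfies `k < T`.) -/
def NodeIndex (T n L : ℕ) : Type :=
  {p : Fin n × Fin (L + 1) × Fin T // ((p.2.2 : ℕ)) * 2 ^ ((p.2.1 : ℕ)) < T}

instance (T n L : ℕ) : Fintype (NodeIndex T n L) := by
  unfold NodeIndex; infer_instance

/-- The exact count at tree node `(i, l, k)`: the sum of the increments of
counter `i` over the dyadic interval `D(l,k) = {t : k·2^l ≤ t < (k+1)·2^l}`. -/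
def nodeCount (T n L : ℕ) (V : Fin T → Fin n → ℤ) (p : NodeIndex T n L) : ℝ :=
  ∑ t : Fin T,
    if ((p.1.2.2 : ℕ)) * 2 ^ ((p.1.2.1 : ℕ)) ≤ (t : ℕ) ∧
        (t : ℕ) < ((p.1.2.2 : ℕ) + 1) * 2 ^ ((p.1.2.1 : ℕ))
      then (V t p.1.1 : ℝ) else 0

open scoped ENNReal NNReal

/-! ### Likelihood ratios of product Gaussians -/

lemma pi_withDensity {ι : Type*} [Fintype ι] (ν : ι → Measure ℝ)
    [∀ i, IsProbabilityMeasure (ν i)] (f : ι → ℝ → ℝ≥0∞) (hf : ∀ i, Measurable (f i))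
    [∀ i, SigmaFinite ((ν i).withDensity (f i))] :
    Measure.pi (fun i => (ν i).withDensity (f i)) =
      (Measure.pi ν).withDensity (fun x => ∏ i, f i (x i)) := by
  refine Measure.pi_eq fun s hs => ?_
  have hbox : MeasurableSet (Set.univ.pi s) := MeasurableSet.univ_pi hs
  have hind : iIndepFun (fun i (x : ι → ℝ) => (s i).indicator (f i) (x i)) (Measure.pi ν) :=
    iIndepFun_pi fun i => ((hf i).indicator (hs i)).aemeasurable
  have hprod : (Set.univ.pi s).indicator (fun x : ι → ℝ => ∏ i, f i (x i)) =
      fun x => ∏ i, (s i).indicator (f i) (x i) := by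
    funext x
    by_cases hx : x ∈ Set.univ.pi s
    · rw [Set.indicator_of_mem hx]
      exact Finset.prod_congr rfl fun i _ => (Set.indicator_of_mem (hx i trivial) _).symm
    · rw [Set.indicator_of_notMem hx]
      simp only [Set.mem_pi, Set.mem_univ, true_implies, not_forall] at hx
      obtain ⟨i, hi⟩ := hx
      exact (Finset.prod_eq_zero (Finset.mem_univ i) (Set.indicator_of_notMem hi _)).symm
  rw [withDensity_apply _ hbox, ← lintegral_indicator hbox, hprod,
    lintegral_prod_eq_prod_lintegral_of_indepFun _ _ hind
      fun i => ((hf i).indicator (hs i)).comp (measurable_pi_apply i)]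
  refine Finset.prod_congr rfl fun i _ => ?_
  rw [withDensity_apply _ (hs i), ← lintegral_indicator (hs i),
    ← (measurePreserving_eval ν i).lintegral_comp ((hf i).indicator (hs i))]

lemma gaussianReal_eq_withDensity (a b : ℝ) {v : ℝ≥0} (hv : v ≠ 0) :
    gaussianReal a v = (gaussianReal b v).withDensity
      (fun x => ENNReal.ofReal (Real.exp ((a - b) * (2 * x - a - b) / (2 * v)))) := by
  rw [gaussianReal_of_var_ne_zero _ hv, gaussianReal_of_var_ne_zero _ hv,
    ← withDensity_mul _ (measurable_gaussianPDF b v) (by fun_prop)]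
  congr 1
  funext x
  have hv' : (v : ℝ) ≠ 0 := by exact_mod_cast hv
  simp only [Pi.mul_apply, gaussianPDF, gaussianPDFReal]
  rw [← ENNReal.ofReal_mul (by positivity), mul_assoc _ (Real.exp _) (Real.exp _), ← Real.exp_add]
  congr 3
  field_simp
  ring

/-- Basic privacy estimate: the sum on the right is the log-likelihood ratio
`∑ i, ((x i - b i)² - (x i - a i)²) / (2 v)`, and off the event that it exceeds `ε` the density of
the first measure relative to the second is at most `exp ε`. -/
lemma pi_gaussianReal_le {ι : Type*} [Fintype ι] (a b : ι → ℝ) {v : ℝ≥0} (hv : v ≠ 0)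
    (ε : ℝ) {Z : Set (ι → ℝ)} (hZ : MeasurableSet Z) :
    Measure.pi (fun i => gaussianReal (a i) v) Z ≤
      ENNReal.ofReal (Real.exp ε) * Measure.pi (fun i => gaussianReal (b i) v) Z +
      Measure.pi (fun i => gaussianReal (a i) v)
        {x | ε < ∑ i, (a i - b i) * (2 * x i - a i - b i) / (2 * v)} := by
  set E : Set (ι → ℝ) := {x | ε < ∑ i, (a i - b i) * (2 * x i - a i - b i) / (2 * v)} with hE
  have hEm : MeasurableSet E := measurableSet_lt measurable_const (by fun_prop)
  refine (measure_le_inter_add_sdiff _ Z E).trans ?_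
  rw [add_comm]
  refine add_le_add ?_ (measure_mono Set.inter_subset_right)
  have hdens : Measure.pi (fun i => gaussianReal (a i) v) =
      (Measure.pi fun i => gaussianReal (b i) v).withDensity (fun x => ∏ i,
        ENNReal.ofReal (Real.exp ((a i - b i) * (2 * x i - a i - b i) / (2 * v)))) := by
    have h := fun i => gaussianReal_eq_withDensity (a i) (b i) hv
    have : ∀ i, SigmaFinite ((gaussianReal (b i) v).withDensity
      (fun x => ENNReal.ofReal (Real.exp ((a i - b i) * (2 * x - a i - b i) / (2 * v))))) :=
      fun i => by rw [← h i]; infer_instance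
    rw [← pi_withDensity (fun i => gaussianReal (b i) v) (fun i x => ENNReal.ofReal
      (Real.exp ((a i - b i) * (2 * x - a i - b i) / (2 * v)))) (fun i => by fun_prop)]
    congr 1
    funext i
    exact h i
  rw [hdens, withDensity_apply _ (hZ.diff hEm)]
  calc _ ≤ ∫⁻ _ in Z \ E, ENNReal.ofReal (Real.exp ε) ∂(Measure.pi fun i => gaussianReal (b i) v) := by
        refine setLIntegral_mono measurable_const fun x hx => ?_
        rw [← ENNReal.ofReal_prod_of_nonneg fun i _ => (Real.exp_pos _).le, ← Real.exp_sum]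
        exact ENNReal.ofReal_le_ofReal (Real.exp_le_exp.2 (not_lt.1 hx.2))
    _ ≤ _ := by
        rw [setLIntegral_const]
        gcongr
        exact Set.sdiff_subset

lemma pi_gaussianReal_map_sum {ι : Type*} [Fintype ι] (a : ι → ℝ) (v : ℝ≥0) (c e : ι → ℝ) :
    (Measure.pi (fun i => gaussianReal (a i) v)).map (fun x => ∑ i, (c i * x i + e i)) =
      gaussianReal (∑ i, (c i * a i + e i)) (v * ∑ i, (c i) ^ 2).toNNReal := by
  have hlaw : ∀ i, (gaussianReal (a i) v).map (fun x => c i * x + e i) =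
      gaussianReal (c i * a i + e i) (NNReal.mk ((c i) ^ 2) (sq_nonneg _) * v) := fun i => by
    rw [← gaussianReal_map_add_const, ← gaussianReal_map_const_mul, Measure.map_map (by fun_prop) (by fun_prop)]
    rfl
  have hmem : ∀ i, MemLp (fun x => c i * x + e i) 2 (gaussianReal (a i) v) := fun i =>
    ((memLp_id_gaussianReal 2).const_mul (c i)).add (memLp_const _)
  have hlaw' : ∀ i, (Measure.pi (fun i => gaussianReal (a i) v)).map (fun x => c i * x i + e i) =
      gaussianReal (c i * a i + e i) (NNReal.mk ((c i) ^ 2) (sq_nonneg _) * v) := fun i => by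
    rw [← hlaw i, ← (measurePreserving_eval (fun i => gaussianReal (a i) v) i).map_eq,
      Measure.map_map (by fun_prop) (by fun_prop)]
    rfl
  have hG : HasGaussianLaw (fun x : ι → ℝ => ∑ i, (c i * x i + e i))
      (Measure.pi (fun i => gaussianReal (a i) v)) := by
    refine iIndepFun.hasGaussianLaw_fun_sum (X := fun i (x : ι → ℝ) => c i * x i + e i)
      (fun i => ⟨?_⟩) (iIndepFun_pi (X := fun i x => c i * x + e i) fun i => by fun_prop)
    rw [hlaw' i]; infer_instance
  rw [hG.map_eq_gaussianReal]
  congr 1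
  · rw [integral_finsetSum]
    · refine Finset.sum_congr rfl fun i _ => ?_
      have := integral_map (μ := Measure.pi (fun i => gaussianReal (a i) v))
        (φ := fun x => c i * x i + e i) (f := fun y : ℝ => y)
        (Measurable.aemeasurable (by fun_prop)) (by fun_prop)
      rw [← this, hlaw' i, integral_id_gaussianReal]
    · intro i _
      exact ((hmem i).comp_measurePreserving
        (measurePreserving_eval (fun i => gaussianReal (a i) v) i)).integrable one_le_two
  · congr 1
    have := variance_sum_pi (μ := fun i => gaussianReal (a i) v) hmem
    rw [Finset.mul_sum]
    convert this using 1
    · congr 1; funext x; simp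
    · refine Finset.sum_congr rfl fun i _ => ?_
      have h2 : Var[fun y : ℝ => y; (gaussianReal (a i) v).map (fun x => c i * x + e i)] = Var[fun x => c i * x + e i; gaussianReal (a i) v] :=
        variance_map (by fun_prop) (by fun_prop)
      rw [← h2, hlaw i, variance_fun_id_gaussianReal]
      simp [mul_comm]

/-! ### Tails of the standard Gaussian -/

lemma stdGaussian_Ioi_zero_le : gaussianReal 0 1 (Set.Ioi 0) ≤ ENNReal.ofReal (1 / 2) := by
  have hneg : gaussianReal 0 1 (Set.Iio 0) = gaussianReal 0 1 (Set.Ioi 0) := by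
    have h := gaussianReal_map_neg (μ := 0) (v := 1)
    rw [neg_zero] at h
    nth_rewrite 1 [← h]
    rw [Measure.map_apply (by fun_prop) measurableSet_Iio]
    congr 1
    ext x; simp
  have hsum : gaussianReal 0 1 (Set.Iio 0) + gaussianReal 0 1 (Set.Ioi 0) ≤ 1 := by
    have hd : Disjoint (Set.Iio (0 : ℝ)) (Set.Ioi 0) :=
      Set.disjoint_left.2 fun x hx hx' => lt_asymm (Set.mem_Iio.1 hx) hx'
    rw [← measure_union hd measurableSet_Ioi]
    exact prob_le_one
  rw [hneg, ← two_mul] at hsum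
  rw [ENNReal.ofReal_div_of_pos two_pos, ENNReal.le_div_iff_mul_le (by simp) (by simp), mul_comm]
  simpa using hsum

/-- Shifting the tail to `(0, ∞)` compares the density of `N(-x, 1)` with that of `N(0, 1)` there:
`exp (-(t + x)² / 2) ≤ exp (-x² / 2) exp (-t² / 2)` since `x t ≥ 0`. The factor `1 / 2` missing from
the Chernoff bound is needed to reach the constant `1.25`. -/
lemma stdGaussian_Ioi_le_exp {x : ℝ} (hx : 0 ≤ x) :
    gaussianReal 0 1 (Set.Ioi x) ≤ ENNReal.ofReal (1 / 2 * Real.exp (-x ^ 2 / 2)) := by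
  have hshift : gaussianReal 0 1 (Set.Ioi x) = gaussianReal (-x) 1 (Set.Ioi 0) := by
    rw [show (-x : ℝ) = 0 - x by ring, ← gaussianReal_map_sub_const,
      Measure.map_apply (by fun_prop) measurableSet_Ioi]
    congr 1
    ext y; simp
  rw [hshift, gaussianReal_apply _ one_ne_zero]
  calc _ ≤ ∫⁻ t in Set.Ioi 0, ENNReal.ofReal (Real.exp (-x ^ 2 / 2)) * gaussianPDF 0 1 t := by
        refine setLIntegral_mono ((measurable_gaussianPDF 0 1).const_mul _) fun t ht => ?_
        have ht : 0 < t := ht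
        simp only [gaussianPDF, gaussianPDFReal]
        rw [← ENNReal.ofReal_mul (by positivity), mul_left_comm, ← Real.exp_add]
        refine ENNReal.ofReal_le_ofReal ?_
        gcongr
        have := mul_nonneg hx ht.le
        simp only [NNReal.coe_one]
        nlinarith
    _ = ENNReal.ofReal (Real.exp (-x ^ 2 / 2)) * gaussianReal 0 1 (Set.Ioi 0) := by
        rw [lintegral_const_mul _ (measurable_gaussianPDF 0 1), gaussianReal_apply _ one_ne_zero]
    _ ≤ _ := by
        rw [mul_comm (1 / 2 : ℝ), ENNReal.ofReal_mul (Real.exp_pos _).le]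
        gcongr
        exact stdGaussian_Ioi_zero_le

/-- The density is bounded by `1` on `(x, 0]`, and `(0, ∞)` has mass at most `1 / 2`. -/
lemma stdGaussian_Ioi_le_of_nonpos {x : ℝ} (hx : x ≤ 0) :
    gaussianReal 0 1 (Set.Ioi x) ≤ ENNReal.ofReal (1 / 2 - x) := by
  rw [← Set.Ioc_union_Ioi_eq_Ioi hx, sub_eq_add_neg, add_comm, ENNReal.ofReal_add (by linarith) (by norm_num)]
  refine (measure_union_le _ _).trans (add_le_add ?_ stdGaussian_Ioi_zero_le)
  rw [gaussianReal_apply _ one_ne_zero]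
  calc _ ≤ ∫⁻ t in Set.Ioc x 0, 1 := by
        refine setLIntegral_mono measurable_const fun t _ => ?_
        rw [← ENNReal.ofReal_one, gaussianPDF, gaussianPDFReal]
        refine ENNReal.ofReal_le_ofReal (mul_le_one₀ (inv_le_one_of_one_le₀ ?_) (Real.exp_pos _).le
          (Real.exp_le_one_iff.2 ?_))
        · rw [Real.one_le_sqrt]
          have := Real.pi_gt_three
          simp only [NNReal.coe_one]
          linarith
        · simp only [NNReal.coe_one]
          nlinarith [sq_nonneg (t - 0)]
    _ = _ := by simp

lemma stdGaussian_Ioi_le_delta {δ : ℝ} (hδ : δ ∈ Set.Ioo (0 : ℝ) 1) {c x : ℝ} (hc : 0 < c)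
    (hc2 : c ^ 2 = 2 * Real.log (1.25 / δ)) (hx : c - 1 / (2 * c) ≤ x) :
    gaussianReal 0 1 (Set.Ioi x) ≤ ENNReal.ofReal δ := by
  refine (measure_mono (Set.Ioi_subset_Ioi hx)).trans ?_
  have hδc : δ = 1.25 * Real.exp (-c ^ 2 / 2) := by
    have hpos : (0 : ℝ) < 1.25 / δ := div_pos (by norm_num) hδ.1
    rw [hc2, show -(2 * Real.log (1.25 / δ)) / 2 = -Real.log (1.25 / δ) by ring, Real.exp_neg,
      Real.exp_log hpos]
    have := hδ.1.ne'
    field_simp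
  -- Makes the cross term in `(c - 1 / (2 * c)) ^ 2` explicit for `nlinarith`.
  have hcc : c * (1 / (2 * c)) = 1 / 2 := by field_simp
  rcases le_total 0 (c - 1 / (2 * c)) with h | h
  · refine (stdGaussian_Ioi_le_exp h).trans (ENNReal.ofReal_le_ofReal ?_)
    have hexp : Real.exp (1 / 2) ≤ 2.5 := by
      have hsq : Real.exp (1 / 2) * Real.exp (1 / 2) = Real.exp 1 := by
        rw [← Real.exp_add]; norm_num
      nlinarith [Real.exp_one_lt_d9, Real.exp_pos (1 / 2)]
    calc 1 / 2 * Real.exp (-(c - 1 / (2 * c)) ^ 2 / 2)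
        ≤ 1 / 2 * Real.exp (1 / 2 + -c ^ 2 / 2) := by
          gcongr
          nlinarith [sq_nonneg (1 / (2 * c))]
      _ ≤ δ := by
          rw [Real.exp_add, hδc]
          nlinarith [Real.exp_pos (-c ^ 2 / 2)]
  · refine (stdGaussian_Ioi_le_of_nonpos h).trans (ENNReal.ofReal_le_ofReal ?_)
    -- `δ < 1` keeps `c` away from `0`: here `log y ≥ 1 - 1 / y` at `y = 1.25 / δ`.
    have hlow : 0.4 ≤ c ^ 2 := by
      have h1 := Real.one_sub_inv_le_log_of_pos (div_pos (by norm_num : (0:ℝ) < 1.25) hδ.1)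
      rw [inv_div] at h1
      have h2 : δ / 1.25 ≤ 0.8 := by
        rw [div_le_iff₀ (by norm_num)]; linarith [hδ.2]
      rw [hc2]
      linarith
    have hup : c ^ 2 ≤ 0.5 := by
      nlinarith
    have hc6 : 0.63 ≤ c := by nlinarith
    have hinv : 1 / (2 * c) ≤ 0.8 := by
      rw [div_le_iff₀ (by positivity)]; linarith
    have := Real.add_one_le_exp (-c ^ 2 / 2)
    linarith

/-! ### The Gaussian mechanism -/

/-- Standardization of the law of the log-likelihood ratio. -/
lemma gaussianReal_Ioi (ε : ℝ) {s : ℝ} (hs : 0 < s) :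
    gaussianReal (s ^ 2 / 2) (s ^ 2).toNNReal (Set.Ioi ε) =
      gaussianReal 0 1 (Set.Ioi ((ε - s ^ 2 / 2) / s)) := by
  have h : gaussianReal (s ^ 2 / 2) (s ^ 2).toNNReal =
      (gaussianReal 0 1).map (fun x => s * x + s ^ 2 / 2) := by
    have h1 := gaussianReal_map_const_mul (μ := 0) (v := 1) s
    have h2 := gaussianReal_map_add_const (μ := s * 0)
      (v := NNReal.mk (s ^ 2) (sq_nonneg s) * 1) (s ^ 2 / 2)
    rw [← h1, Measure.map_map (by fun_prop) (by fun_prop)] at h2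
    rw [Real.toNNReal_of_nonneg (sq_nonneg s)]
    simpa [Function.comp_def] using h2.symm
  rw [h, Measure.map_apply (by fun_prop) measurableSet_Ioi]
  congr 1
  ext x
  simp only [Set.mem_preimage, Set.mem_Ioi]
  rw [div_lt_iff₀ hs, sub_lt_iff_lt_add, mul_comm s x]

/-- The Gaussian mechanism for queries of squared `ℓ²`-sensitivity `Δ` is `(ε, δ)`-differentially
private. -/
lemma gaussian_mechanism {ι : Type*} [Fintype ι] (a b : ι → ℝ) {ε δ Δ σ : ℝ}
    (hε : ε ∈ Set.Ioo (0 : ℝ) 1) (hδ : δ ∈ Set.Ioo (0 : ℝ) 1) (hΔ : 0 < Δ)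
    (hab : ∑ i, (a i - b i) ^ 2 ≤ Δ)
    (hσ : σ = (1 / ε) * Real.sqrt (2 * Δ * Real.log (1.25 / δ)))
    {Z : Set (ι → ℝ)} (hZ : MeasurableSet Z) :
    Measure.pi (fun i => gaussianReal (a i) (Real.toNNReal (σ ^ 2))) Z ≤
      ENNReal.ofReal (Real.exp ε) *
        Measure.pi (fun i => gaussianReal (b i) (Real.toNNReal (σ ^ 2))) Z +
      ENNReal.ofReal δ := by
  have hε0 : 0 < ε := hε.1
  have hlog : 0 < Real.log (1.25 / δ) :=
    Real.log_pos ((one_lt_div hδ.1).2 (hδ.2.trans (by norm_num)))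
  set c := Real.sqrt (2 * Real.log (1.25 / δ)) with hc
  have hc0 : 0 < c := Real.sqrt_pos.2 (by positivity)
  have hc2 : c ^ 2 = 2 * Real.log (1.25 / δ) := Real.sq_sqrt (by positivity)
  have hσc : σ = c * √Δ / ε := by
    rw [hσ, hc, ← Real.sqrt_mul (by positivity), mul_right_comm]
    ring
  have hσ0 : 0 < σ := by rw [hσc]; positivity
  rcases (Finset.sum_nonneg fun i _ => sq_nonneg (a i - b i) :
    0 ≤ ∑ i, (a i - b i) ^ 2).eq_or_lt with h0 | hpos
  -- For equal means `s` would vanish, so this degenerate case is separate.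
  · have hEq : a = b := by
      funext i
      have := (Finset.sum_eq_zero_iff_of_nonneg fun i _ => sq_nonneg (a i - b i)).1 h0.symm i
        (Finset.mem_univ i)
      exact sub_eq_zero.1 (pow_eq_zero_iff two_ne_zero |>.1 this)
    rw [hEq]
    refine le_add_right (le_mul_of_one_le_left' ?_)
    rw [ENNReal.one_le_ofReal]
    exact Real.one_le_exp hε0.le
  have hv : (σ ^ 2).toNNReal ≠ 0 := by
    rw [Ne, Real.toNNReal_eq_zero, not_le]; positivity
  have hvσ : ((σ ^ 2).toNNReal : ℝ) = σ ^ 2 := Real.coe_toNNReal _ (sq_nonneg σ)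
  refine (pi_gaussianReal_le a b hv ε hZ).trans (add_le_add le_rfl ?_)
  set s := √(∑ i, (a i - b i) ^ 2) / σ with hs
  have hs0 : 0 < s := div_pos (Real.sqrt_pos.2 hpos) hσ0
  have hs2 : s ^ 2 = (∑ i, (a i - b i) ^ 2) / σ ^ 2 := by
    rw [hs, div_pow, Real.sq_sqrt hpos.le]
  have htail : Measure.pi (fun i => gaussianReal (a i) (σ ^ 2).toNNReal)
      {x | ε < ∑ i, (a i - b i) * (2 * x i - a i - b i) / (2 * ((σ ^ 2).toNNReal : ℝ))} =
      gaussianReal (s ^ 2 / 2) (s ^ 2).toNNReal (Set.Ioi ε) := by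
    have hlaw := pi_gaussianReal_map_sum a (σ ^ 2).toNNReal (fun i => (a i - b i) / σ ^ 2)
      (fun i => -((a i - b i) * (a i + b i) / (2 * σ ^ 2)))
    have hmean : ∑ i, ((a i - b i) / σ ^ 2 * a i + -((a i - b i) * (a i + b i) / (2 * σ ^ 2))) =
        s ^ 2 / 2 := by
      rw [hs2, Finset.sum_div, Finset.sum_div]
      refine Finset.sum_congr rfl fun i _ => ?_
      field_simp
      ring
    have hvar : ((σ ^ 2).toNNReal : ℝ) * ∑ i, ((a i - b i) / σ ^ 2) ^ 2 = s ^ 2 := by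
      rw [hs2, hvσ, Finset.sum_div, Finset.mul_sum]
      refine Finset.sum_congr rfl fun i _ => ?_
      field_simp
    rw [hmean, hvar] at hlaw
    rw [← hlaw, Measure.map_apply (by fun_prop) measurableSet_Ioi]
    congr 1
    ext x
    simp only [Set.mem_ofPred_eq, Set.mem_preimage, Set.mem_Ioi, hvσ]
    refine iff_of_eq (congrArg (ε < ·) (Finset.sum_congr rfl fun i _ => ?_))
    field_simp
    ring
  rw [htail, gaussianReal_Ioi ε hs0]
  refine stdGaussian_Ioi_le_delta hδ hc0 hc2 ?_
  have hsc : s * c ≤ ε := by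
    have hle : √(∑ i, (a i - b i) ^ 2) ≤ √Δ := Real.sqrt_le_sqrt hab
    have hσε : σ * ε = c * √Δ := by rw [hσc]; field_simp
    rw [hs, div_mul_eq_mul_div, div_le_iff₀ hσ0, mul_comm ε, hσε, mul_comm]
    gcongr
  have h1 : c ≤ ε / s := (le_div_iff₀ hs0).2 (by linarith)
  have h2 : s / 2 ≤ 1 / (2 * c) := by
    rw [div_le_div_iff₀ two_pos (by positivity)]
    linarith [hε.2]
  have h3 : (ε - s ^ 2 / 2) / s = ε / s - s / 2 := by field_simp
  linarith

/-! ### Sensitivity of the binary tree -/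

lemma sum_sq_nodeCount_sub_le {T n m : ℕ} (L : ℕ) {V V' : Fin T → Fin n → ℤ}
    (h : MNeighboring T n m V V') :
    ∑ p, (nodeCount T n L V p - nodeCount T n L V' p) ^ 2 ≤ (m : ℝ) * (L + 1) := by
  obtain ⟨I, hI, hle, heq⟩ := h
  have hsum_le : ∀ i, ∑ t, |(V t i : ℝ) - V' t i| ≤ if i ∈ I then 1 else 0 := by
    intro i
    split_ifs with hi
    · exact_mod_cast hle i hi
    · exact (Finset.sum_eq_zero fun t _ => by simp [heq i hi t]).le
  have hsum_le_one : ∀ i, ∑ t, |(V t i : ℝ) - V' t i| ≤ 1 := fun i =>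
    (hsum_le i).trans (by split_ifs <;> norm_num)
  -- The change of counter `q.1` inside the dyadic interval of `q`, for all triples `q`, including
  -- those which are not tree nodes.
  let S : Fin n × Fin (L + 1) × Fin T → ℝ := fun q => ∑ t : Fin T,
    if (q.2.2 : ℕ) * 2 ^ (q.2.1 : ℕ) ≤ (t : ℕ) ∧ (t : ℕ) < ((q.2.2 : ℕ) + 1) * 2 ^ (q.2.1 : ℕ)
      then |(V t q.1 : ℝ) - V' t q.1| else 0
  have hS0 : ∀ q, 0 ≤ S q := fun q => Finset.sum_nonneg fun t _ => by split_ifs <;> positivity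
  have hS1 : ∀ q, S q ≤ 1 := fun q => (Finset.sum_le_sum fun t _ => by
    split_ifs
    · exact le_rfl
    · exact abs_nonneg _).trans (hsum_le_one q.1)
  have hterm : ∀ p : NodeIndex T n L,
      (nodeCount T n L V p - nodeCount T n L V' p) ^ 2 ≤ S p.1 := by
    intro p
    have habs : |nodeCount T n L V p - nodeCount T n L V' p| ≤ S p.1 := by
      unfold nodeCount
      rw [← Finset.sum_sub_distrib]
      refine (Finset.abs_sum_le_sum_abs _ _).trans (Finset.sum_le_sum fun t _ => ?_)
      split_ifs <;> simp
    -- `x² ≤ |x|` because `|x| ≤ S p ≤ 1`.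
    rw [← sq_abs]
    nlinarith [abs_nonneg (nodeCount T n L V p - nodeCount T n L V' p), hS1 p.1]
  -- At a fixed level, every time step lies in at most one dyadic interval.
  have hlevel : ∀ i l, ∑ k, S (i, l, k) ≤ ∑ t, |(V t i : ℝ) - V' t i| := by
    intro i l
    rw [Finset.sum_comm]
    refine Finset.sum_le_sum fun t _ => ?_
    dsimp only
    rw [← Finset.sum_filter, Finset.sum_const, nsmul_eq_mul]
    refine mul_le_of_le_one_left (abs_nonneg _) ?_
    norm_cast
    refine Finset.card_le_one.2 fun k hk k' hk' => ?_
    simp only [Finset.mem_filter, Finset.mem_univ, true_and] at hk hk'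
    have hdiv : ∀ j : ℕ, j * 2 ^ (l : ℕ) ≤ (t : ℕ) → (t : ℕ) < (j + 1) * 2 ^ (l : ℕ) →
        (t : ℕ) / 2 ^ (l : ℕ) = j := fun j h1 h2 => Nat.div_eq_of_lt_le h1 h2
    exact Fin.ext ((hdiv _ hk.1 hk.2).symm.trans (hdiv _ hk'.1 hk'.2))
  calc _ ≤ ∑ p : NodeIndex T n L, S p.1 := Finset.sum_le_sum fun p _ => hterm p
    _ ≤ ∑ q, S q := by
        classical
        rw [← Finset.sum_image (f := S) (s := Finset.univ) (g := fun p : NodeIndex T n L => p.1)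
          fun p _ p' _ hpp => Subtype.ext hpp]
        exact Finset.sum_le_univ_sum_of_nonneg hS0
    _ = ∑ i, ∑ l, ∑ k, S (i, l, k) := by simp_rw [Fintype.sum_prod_type]
    _ ≤ ∑ i, ∑ _l : Fin (L + 1), if i ∈ I then (1 : ℝ) else 0 :=
        Finset.sum_le_sum fun i _ => Finset.sum_le_sum fun l _ => (hlevel i l).trans (hsum_le i)
    _ = (I.card : ℝ) * (L + 1) := by
        simp only [Finset.sum_const, Finset.card_univ, Fintype.card_fin, nsmul_eq_mul,
          ← Finset.mul_sum, Finset.sum_boole, Finset.filter_mem_eq_inter, Finset.univ_inter]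
        push_cast
        ring
    _ ≤ _ := by gcongr

/-- Theorem 1: the Gaussian Binary Mechanism applied to `n` counters is
`(ε, δ)`-differentially private on `m`-neighboring inputs. -/
theorem gaussBM_privacy
    (T n m : ℕ) (hT : 0 < T) (hn : 0 < n) (hm : 0 < m)
    (ε δ : ℝ) (hε : ε ∈ Set.Ioo (0:ℝ) 1) (hδ : δ ∈ Set.Ioo (0:ℝ) 1)
    (L : ℕ) (hL : L = ⌈Real.logb 2 (T + 1)⌉₊)
    (σ : ℝ)
    (hσ : σ = (1 / ε) * Real.sqrt (2 * (L + 1) * m * Real.log (1.25 / δ)))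
    (V V' : Fin T → Fin n → ℤ) (hVV' : MNeighboring T n m V V')
    (Z : Set (NodeIndex T n L → ℝ)) (hZ : MeasurableSet Z) :
    Measure.pi
        (fun p => gaussianReal (nodeCount T n L V p) (Real.toNNReal (σ ^ 2))) Z
      ≤ ENNReal.ofReal (Real.exp ε) *
          Measure.pi
            (fun p => gaussianReal (nodeCount T n L V' p)
              (Real.toNNReal (σ ^ 2))) Z
        + ENNReal.ofReal δ := by
  refine gaussian_mechanism (Δ := m * (L + 1)) _ _ hε hδ (by positivity)
    (sum_sq_nodeCount_sub_le L hVV') ?_ hZ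
  rw [hσ]
  congr 3
  ring
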